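/- Let (σ_T)_{T≥1} be a sequence of positive reals, q ∈ (0,1], ε ≥ 0 and δ ∈ [0,1) such that δ_S(σ_T, q, T, ε) ≤ δ for every T ∈ ℕ₊. Then σ_T² = Ω(T), i.e. there exist c > 0 and T₀ ∈ ℕ such that σ_T² ≥ c·T for all T ≥ T₀. -/

import Mathlib

/-!
If `L = ln (dP/dQ)` is the privacy loss, then `1 - δ(ε) = E_P[min 1 (e^{ε - L})]`, and the weight
`min 1 (e^{ε - L})` is bounded both by `1` and by `e^ε dQ/dP`. Weighting the inequality
`(E_P X - E_Q X)² ≤ 2 (X - E_P X)² + 2 (X - E_Q X)²` accordingly and integrating against `P` yields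
`(E_P X - E_Q X)² (1 - δ(ε)) ≤ 2 Var_P X + 2 e^ε Var_Q X` for every square-integrable statistic `X`.

Take for `X` the sum of the `T` samples of the subsampled Gaussian mechanism. Its means differ by
`qT`, while both variances are at most of order `T (σ² + 1)`; hence `δ(ε) ≤ δ < 1` forces `σ² ≳ T`.
-/

open MeasureTheory ProbabilityTheory Real Filter

/-- Density of the dominating-pair mixture `P_{σ,q}` for the Poisson subsampled Gaussian
mechanism with sensitivity 1: `p_{σ,q}(t) = q·φ_σ(t−1) + (1−q)·φ_σ(t)`. -/
noncomputable def mixDensity (σ q t : ℝ) : ℝ :=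
  q * gaussianPDFReal 1 (σ ^ 2).toNNReal t + (1 - q) * gaussianPDFReal 0 (σ ^ 2).toNNReal t

/-- The mixture measure `P_{σ,q}`. -/
noncomputable def mixMeasure (σ q : ℝ) : Measure ℝ :=
  MeasureTheory.volume.withDensity fun t => ENNReal.ofReal (mixDensity σ q t)

/-- The privacy loss function `t ↦ ln(p_{σ,q}(t)/φ_σ(t))`. -/
noncomputable def plrv (σ q t : ℝ) : ℝ :=
  Real.log (mixDensity σ q t / gaussianPDFReal 0 (σ ^ 2).toNNReal t)

/-- Tight privacy profile (accounting oracle) of the `T`-fold composition of the Poisson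
subsampled Gaussian mechanism: `δ_S(σ, q, T, ε) = E_{s ∼ L_{σ,q,T}}[max(1 − e^{ε−s}, 0)]`,
where `L_{σ,q,T}` is the sum of `T` independent copies of the PLRV. -/
noncomputable def deltaS (σ q : ℝ) (T : ℕ) (ε : ℝ) : ℝ :=
  ∫ x : Fin T → ℝ, max (1 - Real.exp (ε - ∑ i, plrv σ q (x i))) 0
    ∂(Measure.pi fun _ => mixMeasure σ q)

lemma sq_sub_mul_min_one_le (x a b ε l : ℝ) :
    (a - b) ^ 2 * min 1 (exp (ε - l))
      ≤ 2 * (x - a) ^ 2 + 2 * exp ε * (exp (-l) * (x - b) ^ 2) := by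
  set w := min 1 (exp (ε - l))
  have : 0 ≤ w := le_min zero_le_one (exp_pos _).le
  have hexp : exp (ε - l) = exp ε * exp (-l) := by rw [← exp_add, sub_eq_add_neg]
  calc (a - b) ^ 2 * w
      ≤ (2 * (x - a) ^ 2 + 2 * (x - b) ^ 2) * w := by
        gcongr
        nlinarith [sq_nonneg ((x - a) + (x - b))]
    _ = 2 * (x - a) ^ 2 * w + 2 * (x - b) ^ 2 * w := add_mul _ _ _
    _ ≤ 2 * (x - a) ^ 2 * 1 + 2 * (x - b) ^ 2 * exp (ε - l) := by
        gcongr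
        exacts [min_le_left _ _, min_le_right _ _]
    _ = 2 * (x - a) ^ 2 + 2 * exp ε * (exp (-l) * (x - b) ^ 2) := by
        rw [hexp]
        ring

section PrivacyLoss

variable {Ω : Type*} [MeasurableSpace Ω]

/-- `L` is a privacy loss of `P` against `Q`, that is, a version of the log-likelihood ratio
`ln (dP/dQ)`. It is encoded through the density `e^{-L}` of `Q` with respect to `P`, so that no
Radon–Nikodym derivative is involved. -/
structure IsPrivacyLoss (P Q : Measure Ω) (L : Ω → ℝ) : Prop where
  measurable : Measurable L
  withDensity_exp_neg : P.withDensity (fun ω => ENNReal.ofReal (exp (-L ω))) = Q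

/-- The privacy profile `E_P[max(1 − e^{ε−L}, 0)]`: the hockey-stick divergence of order `e^ε`
between the two measures whose privacy loss is `L`. -/
noncomputable def privacyProfile (P : Measure Ω) (L : Ω → ℝ) (ε : ℝ) : ℝ :=
  ∫ ω, max (1 - exp (ε - L ω)) 0 ∂P

lemma isPrivacyLoss_log_div (μ : Measure Ω) {p g : Ω → ℝ} (hp : Measurable p) (hg : Measurable g)
    (hp_pos : ∀ ω, 0 < p ω) (hg_pos : ∀ ω, 0 < g ω) :
    IsPrivacyLoss (μ.withDensity fun ω => ENNReal.ofReal (p ω))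
      (μ.withDensity fun ω => ENNReal.ofReal (g ω)) (fun ω => log (p ω / g ω)) where
  measurable := (hp.div hg).log
  withDensity_exp_neg := by
    rw [← withDensity_mul μ hp.ennreal_ofReal
      (g := fun ω => ENNReal.ofReal (exp (-log (p ω / g ω)))) (by fun_prop)]
    congr 1 with ω
    rw [Pi.mul_apply, ← ENNReal.ofReal_mul (hp_pos ω).le, exp_neg,
      exp_log (div_pos (hp_pos ω) (hg_pos ω)), inv_div, mul_div_cancel₀ _ (hp_pos ω).ne']

namespace IsPrivacyLoss

variable {P Q : Measure Ω} {L : Ω → ℝ}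

lemma integral_eq (h : IsPrivacyLoss P Q L) (f : Ω → ℝ) :
    ∫ ω, f ω ∂Q = ∫ ω, exp (-L ω) * f ω ∂P := by
  rw [← h.withDensity_exp_neg, integral_withDensity_eq_integral_toReal_smul
    h.measurable.fun_neg.exp.ennreal_ofReal (ae_of_all _ fun _ => ENNReal.ofReal_lt_top)]
  simp only [ENNReal.toReal_ofReal (exp_pos _).le, smul_eq_mul]

lemma integrable_iff (h : IsPrivacyLoss P Q L) {f : Ω → ℝ} :
    Integrable f Q ↔ Integrable (fun ω => exp (-L ω) * f ω) P := by
  rw [← h.withDensity_exp_neg, integrable_withDensity_iff_integrable_smul'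
    h.measurable.fun_neg.exp.ennreal_ofReal (ae_of_all _ fun _ => ENNReal.ofReal_lt_top)]
  simp only [ENNReal.toReal_ofReal (exp_pos _).le, smul_eq_mul]

lemma integrable_exp_neg [IsFiniteMeasure Q] (h : IsPrivacyLoss P Q L) :
    Integrable (fun ω => exp (-L ω)) P := by
  simpa only [mul_one] using h.integrable_iff.1 (integrable_const (1 : ℝ))

lemma ofReal_setIntegral_exp_neg [IsFiniteMeasure Q] (h : IsPrivacyLoss P Q L) {s : Set Ω}
    (hs : MeasurableSet s) : ENNReal.ofReal (∫ ω in s, exp (-L ω) ∂P) = Q s := by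
  rw [ofReal_integral_eq_lintegral_ofReal h.integrable_exp_neg.integrableOn
    (ae_of_all _ fun _ => (exp_pos _).le), ← withDensity_apply _ hs, h.withDensity_exp_neg]

end IsPrivacyLoss

variable {P : Measure Ω} {L : Ω → ℝ}

lemma integrable_min_one_exp [IsFiniteMeasure P] (hL : Measurable L) (ε : ℝ) :
    Integrable (fun ω => min 1 (exp (ε - L ω))) P := by
  refine .of_bound (C := 1) (by fun_prop) (ae_of_all _ fun ω => ?_)
  rw [norm_of_nonneg (le_min zero_le_one (exp_pos _).le)]
  exact min_le_left _ _

variable [IsProbabilityMeasure P]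

lemma one_sub_privacyProfile (hL : Measurable L) (ε : ℝ) :
    1 - privacyProfile P L ε = ∫ ω, min 1 (exp (ε - L ω)) ∂P := by
  have hmax (ω : Ω) : max (1 - exp (ε - L ω)) 0 = 1 - min 1 (exp (ε - L ω)) := by
    rw [← sub_self (1 : ℝ), max_sub_sub_left, min_comm]
  simp only [privacyProfile, hmax]
  rw [integral_sub (integrable_const _) (integrable_min_one_exp hL ε)]
  simp only [integral_const, probReal_univ, one_smul, sub_sub_cancel]

theorem IsPrivacyLoss.sq_sub_integral_mul_one_sub_privacyProfile_le {Q : Measure Ω}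
    [IsFiniteMeasure Q] (h : IsPrivacyLoss P Q L) {X : Ω → ℝ} (hP : MemLp X 2 P)
    (hQ : MemLp X 2 Q) (ε : ℝ) :
    (∫ ω, X ω ∂P - ∫ ω, X ω ∂Q) ^ 2 * (1 - privacyProfile P L ε)
      ≤ 2 * (Var[X; P] + exp ε * Var[X; Q]) := by
  set a := ∫ ω, X ω ∂P with ha
  set b := ∫ ω, X ω ∂Q with hb
  have hXP : Integrable (fun ω => 2 * (X ω - a) ^ 2) P :=
    (hP.sub (memLp_const a)).integrable_sq.const_mul 2
  have hXQ : Integrable (fun ω => 2 * exp ε * (exp (-L ω) * (X ω - b) ^ 2)) P :=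
    (h.integrable_iff.1 (hQ.sub (memLp_const b)).integrable_sq).const_mul _
  calc (a - b) ^ 2 * (1 - privacyProfile P L ε)
      = ∫ ω, (a - b) ^ 2 * min 1 (exp (ε - L ω)) ∂P := by
        rw [one_sub_privacyProfile h.measurable, integral_const_mul]
    _ ≤ ∫ ω, (2 * (X ω - a) ^ 2 + 2 * exp ε * (exp (-L ω) * (X ω - b) ^ 2)) ∂P :=
        integral_mono ((integrable_min_one_exp h.measurable ε).const_mul _) (hXP.add hXQ)
          fun ω => sq_sub_mul_min_one_le (X ω) a b ε (L ω)
    _ = 2 * (Var[X; P] + exp ε * Var[X; Q]) := by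
        rw [integral_add hXP hXQ, integral_const_mul, integral_const_mul, ← h.integral_eq,
          ha, hb, ← variance_eq_integral hP.aemeasurable, ← variance_eq_integral hQ.aemeasurable]
        ring

end PrivacyLoss

section Pi

variable {ι : Type*} [Fintype ι] {E : ι → Type*} [∀ i, MeasurableSpace (E i)]
  {P Q : ∀ i, Measure (E i)} {L X : ∀ i, E i → ℝ}

lemma IsPrivacyLoss.pi [∀ i, SigmaFinite (P i)] [∀ i, IsFiniteMeasure (Q i)]
    (h : ∀ i, IsPrivacyLoss (P i) (Q i) (L i)) :
    IsPrivacyLoss (Measure.pi P) (Measure.pi Q) (fun ω => ∑ i, L i (ω i)) where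
  measurable := Finset.measurable_fun_sum _ fun i _ =>
    (h i).measurable.comp (measurable_pi_apply i)
  withDensity_exp_neg := by
    refine (Measure.pi_eq fun s hs => ?_).symm
    rw [withDensity_apply _ (MeasurableSet.univ_pi hs), Measure.restrict_pi_pi]
    simp only [← Finset.sum_neg_distrib, exp_sum]
    have hint : Integrable (fun ω : ∀ i, E i => ∏ i, exp (-L i (ω i)))
        (Measure.pi fun i => (P i).restrict (s i)) :=
      Integrable.fintype_prod_dep fun i => (h i).integrable_exp_neg.integrableOn
    rw [← ofReal_integral_eq_lintegral_ofReal hint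
        (ae_of_all _ fun ω => Finset.prod_nonneg fun i _ => (exp_pos _).le),
      integral_fintype_prod_eq_prod (fun i t => exp (-L i t)),
      ENNReal.ofReal_prod_of_nonneg fun i _ => integral_nonneg fun _ => (exp_pos _).le]
    exact Finset.prod_congr rfl fun i _ => (h i).ofReal_setIntegral_exp_neg (hs i)

variable [∀ i, IsProbabilityMeasure (P i)] [∀ i, IsProbabilityMeasure (Q i)]

lemma memLp_sum_pi {p : ENNReal} (h : ∀ i, MemLp (X i) p (P i)) :
    MemLp (∑ i, fun ω => X i (ω i)) p (Measure.pi P) :=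
  memLp_finsetSum' _ fun i _ => (h i).comp_measurePreserving (measurePreserving_eval P i)

lemma integral_sum_pi (h : ∀ i, Integrable (X i) (P i)) :
    ∫ ω, (∑ i, fun ω => X i (ω i)) ω ∂Measure.pi P = ∑ i, ∫ t, X i t ∂P i := by
  simp only [Finset.sum_apply]
  rw [integral_finsetSum _ fun i _ => integrable_comp_eval (h i)]
  exact Finset.sum_congr rfl fun i _ => integral_comp_eval (h i).aestronglyMeasurable

theorem IsPrivacyLoss.sq_sub_integral_mul_one_sub_privacyProfile_pi_le
    (h : ∀ i, IsPrivacyLoss (P i) (Q i) (L i)) (hP : ∀ i, MemLp (X i) 2 (P i))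
    (hQ : ∀ i, MemLp (X i) 2 (Q i)) (ε : ℝ) :
    (∑ i, ∫ t, X i t ∂P i - ∑ i, ∫ t, X i t ∂Q i) ^ 2
        * (1 - privacyProfile (Measure.pi P) (fun ω => ∑ i, L i (ω i)) ε)
      ≤ 2 * (∑ i, Var[X i; P i] + exp ε * ∑ i, Var[X i; Q i]) := by
  rw [← integral_sum_pi fun i => (hP i).integrable one_le_two,
    ← integral_sum_pi fun i => (hQ i).integrable one_le_two,
    ← variance_sum_pi hP, ← variance_sum_pi hQ]
  exact (IsPrivacyLoss.pi h).sq_sub_integral_mul_one_sub_privacyProfile_le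
    (memLp_sum_pi hP) (memLp_sum_pi hQ) ε

end Pi

section Mixture

variable {Ω : Type*} [MeasurableSpace Ω]

/-- The mixture `q μ + (1 - q) ν`, meaningful for a weight `q ∈ [0, 1]`. -/
noncomputable def mixture (q : ℝ) (μ ν : Measure Ω) : Measure Ω :=
  ENNReal.ofReal q • μ + ENNReal.ofReal (1 - q) • ν

variable {μ ν : Measure Ω} {q : ℝ}

lemma isProbabilityMeasure_mixture [IsProbabilityMeasure μ] [IsProbabilityMeasure ν]
    (hq : q ∈ Set.Icc (0 : ℝ) 1) : IsProbabilityMeasure (mixture q μ ν) where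
  measure_univ := by
    simp only [mixture, Measure.add_apply, Measure.smul_apply, measure_univ, smul_eq_mul, mul_one]
    rw [← ENNReal.ofReal_add hq.1 (sub_nonneg.2 hq.2), add_sub_cancel, ENNReal.ofReal_one]

lemma integrable_mixture {f : Ω → ℝ} (hμ : Integrable f μ) (hν : Integrable f ν) :
    Integrable f (mixture q μ ν) :=
  (hμ.smul_measure ENNReal.ofReal_ne_top).add_measure (hν.smul_measure ENNReal.ofReal_ne_top)

lemma memLp_two_mixture {f : Ω → ℝ} (hμ : MemLp f 2 μ) (hν : MemLp f 2 ν) :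
    MemLp f 2 (mixture q μ ν) :=
  (memLp_two_iff_integrable_sq (hμ.1.smul_measure _ |>.add_measure (hν.1.smul_measure _))).2
    (integrable_mixture hμ.integrable_sq hν.integrable_sq)

lemma integral_mixture (hq : q ∈ Set.Icc (0 : ℝ) 1) {f : Ω → ℝ} (hμ : Integrable f μ)
    (hν : Integrable f ν) :
    ∫ ω, f ω ∂mixture q μ ν = q * ∫ ω, f ω ∂μ + (1 - q) * ∫ ω, f ω ∂ν := by
  rw [mixture, integral_add_measure (hμ.smul_measure ENNReal.ofReal_ne_top)
      (hν.smul_measure ENNReal.ofReal_ne_top), integral_smul_measure, integral_smul_measure,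
    ENNReal.toReal_ofReal hq.1, ENNReal.toReal_ofReal (sub_nonneg.2 hq.2), smul_eq_mul,
    smul_eq_mul]

lemma variance_mixture [IsProbabilityMeasure μ] [IsProbabilityMeasure ν]
    (hq : q ∈ Set.Icc (0 : ℝ) 1) {X : Ω → ℝ} (hμ : MemLp X 2 μ) (hν : MemLp X 2 ν) :
    Var[X; mixture q μ ν] = q * Var[X; μ] + (1 - q) * Var[X; ν]
      + q * (1 - q) * (∫ ω, X ω ∂μ - ∫ ω, X ω ∂ν) ^ 2 := by
  have := isProbabilityMeasure_mixture (μ := μ) (ν := ν) hq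
  rw [variance_eq_sub (memLp_two_mixture hμ hν), variance_eq_sub hμ, variance_eq_sub hν]
  simp only [Pi.pow_apply]
  rw [integral_mixture hq (hμ.integrable one_le_two) (hν.integrable one_le_two),
    integral_mixture hq hμ.integrable_sq hν.integrable_sq]
  ring

end Mixture

section SubsampledGaussian

variable {σ q : ℝ}

lemma toNNReal_sq_ne_zero (hσ : σ ≠ 0) : (σ ^ 2).toNNReal ≠ 0 :=
  (toNNReal_pos.2 (sq_pos_of_ne_zero hσ)).ne'

lemma mixDensity_pos (hσ : σ ≠ 0) (hq : q ∈ Set.Icc (0 : ℝ) 1) (t : ℝ) :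
    0 < mixDensity σ q t := by
  have hφ (m : ℝ) := gaussianPDFReal_pos m _ t (toNNReal_sq_ne_zero hσ)
  exact convex_Ioi (0 : ℝ) (hφ 1) (hφ 0) hq.1 (sub_nonneg.2 hq.2) (add_sub_cancel _ _)

lemma measurable_mixDensity (σ q : ℝ) : Measurable (mixDensity σ q) := by
  unfold mixDensity
  fun_prop

lemma mixMeasure_eq_mixture (hσ : σ ≠ 0) (hq : q ∈ Set.Icc (0 : ℝ) 1) :
    mixMeasure σ q
      = mixture q (gaussianReal 1 (σ ^ 2).toNNReal) (gaussianReal 0 (σ ^ 2).toNNReal) := by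
  have hq' : 0 ≤ 1 - q := sub_nonneg.2 hq.2
  have hφ (m t : ℝ) := gaussianPDFReal_nonneg m (σ ^ 2).toNNReal t
  have hσ' := toNNReal_sq_ne_zero hσ
  rw [mixture, gaussianReal_of_var_ne_zero _ hσ', gaussianReal_of_var_ne_zero _ hσ',
    ← withDensity_smul _ (measurable_gaussianPDF _ _),
    ← withDensity_smul _ (measurable_gaussianPDF _ _),
    ← withDensity_add_left ((measurable_gaussianPDF _ _).const_smul _), mixMeasure]
  congr 1 with t
  simp only [mixDensity, Pi.add_apply, Pi.smul_apply, smul_eq_mul, gaussianPDF]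
  rw [ENNReal.ofReal_add (mul_nonneg hq.1 (hφ 1 t)) (mul_nonneg hq' (hφ 0 t)),
    ENNReal.ofReal_mul hq.1, ENNReal.ofReal_mul hq']

lemma isPrivacyLoss_plrv (hσ : σ ≠ 0) (hq : q ∈ Set.Icc (0 : ℝ) 1) :
    IsPrivacyLoss (mixMeasure σ q) (gaussianReal 0 (σ ^ 2).toNNReal) (plrv σ q) := by
  have hσ' := toNNReal_sq_ne_zero hσ
  rw [gaussianReal_of_var_ne_zero _ hσ']
  exact isPrivacyLoss_log_div volume (measurable_mixDensity σ q) (measurable_gaussianPDFReal _ _)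
    (mixDensity_pos hσ hq) fun t => gaussianPDFReal_pos _ _ t hσ'

lemma deltaS_eq_privacyProfile (σ q : ℝ) (T : ℕ) (ε : ℝ) :
    deltaS σ q T ε = privacyProfile (Measure.pi fun _ : Fin T => mixMeasure σ q)
      (fun t => ∑ i, plrv σ q (t i)) ε :=
  rfl

lemma memLp_two_id_gaussianReal (m : ℝ) (v : NNReal) : MemLp id 2 (gaussianReal m v) :=
  memLp_id_gaussianReal' 2 ENNReal.ofNat_ne_top

lemma integral_id_mixMeasure (hσ : σ ≠ 0) (hq : q ∈ Set.Icc (0 : ℝ) 1) :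
    ∫ t, t ∂mixMeasure σ q = q := by
  have hint (m : ℝ) := (memLp_two_id_gaussianReal m (σ ^ 2).toNNReal).integrable one_le_two
  rw [mixMeasure_eq_mixture hσ hq, integral_mixture (f := fun t => t) hq (hint 1) (hint 0)]
  simp only [integral_id_gaussianReal, mul_one, mul_zero, add_zero]

lemma variance_id_mixMeasure (hσ : σ ≠ 0) (hq : q ∈ Set.Icc (0 : ℝ) 1) :
    Var[id; mixMeasure σ q] = σ ^ 2 + q * (1 - q) := by
  rw [mixMeasure_eq_mixture hσ hq,
    variance_mixture hq (memLp_two_id_gaussianReal _ _) (memLp_two_id_gaussianReal _ _)]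
  simp only [id, integral_id_gaussianReal, variance_id_gaussianReal, coe_toNNReal _ (sq_nonneg σ)]
  ring

theorem sq_mul_one_sub_deltaS_le (hσ : σ ≠ 0) (hq : q ∈ Set.Icc (0 : ℝ) 1) (T : ℕ) (ε : ℝ) :
    (q * T) ^ 2 * (1 - deltaS σ q T ε) ≤ 2 * T * ((1 + exp ε) * σ ^ 2 + q * (1 - q)) := by
  have hmix := mixMeasure_eq_mixture hσ hq
  have : IsProbabilityMeasure (mixMeasure σ q) := hmix ▸ isProbabilityMeasure_mixture hq
  have hmem : MemLp id 2 (mixMeasure σ q) :=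
    hmix ▸ memLp_two_mixture (memLp_two_id_gaussianReal _ _) (memLp_two_id_gaussianReal _ _)
  have hmeans := IsPrivacyLoss.sq_sub_integral_mul_one_sub_privacyProfile_pi_le (ι := Fin T)
    (fun _ => isPrivacyLoss_plrv hσ hq) (fun _ => hmem)
    (fun _ => memLp_two_id_gaussianReal 0 (σ ^ 2).toNNReal) ε
  simp only [← deltaS_eq_privacyProfile, integral_id_mixMeasure hσ hq,
    variance_id_mixMeasure hσ hq, integral_id_gaussianReal, variance_id_gaussianReal,
    coe_toNNReal _ (sq_nonneg σ), id, Finset.sum_const, Finset.card_univ, Fintype.card_fin,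
    nsmul_eq_mul, mul_zero, sub_zero] at hmeans
  calc (q * T) ^ 2 * (1 - deltaS σ q T ε)
      = (T * q) ^ 2 * (1 - deltaS σ q T ε) := by rw [mul_comm q]
    _ ≤ 2 * (T * (σ ^ 2 + q * (1 - q)) + exp ε * (T * σ ^ 2)) := hmeans
    _ = 2 * T * ((1 + exp ε) * σ ^ 2 + q * (1 - q)) := by ring

end SubsampledGaussian

theorem sigma_sq_Omega_T_general {q : ℝ} (hq : q ∈ Set.Ioc (0 : ℝ) 1) (ε : ℝ) {δ : ℝ}
    (hδ : δ < 1) :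
    ∃ c > (0 : ℝ), ∀ᶠ T : ℕ in atTop, ∀ σ : ℝ, σ ≠ 0 → deltaS σ q T ε ≤ δ → c * T ≤ σ ^ 2 := by
  have : 0 < q := hq.1
  have : 0 < 1 - δ := sub_pos.2 hδ
  refine ⟨q ^ 2 * (1 - δ) / (4 * (1 + exp ε)), by positivity, ?_⟩
  filter_upwards [eventually_gt_atTop 0,
    tendsto_natCast_atTop_atTop.eventually_ge_atTop (4 * (1 - q) / (q * (1 - δ)))]
    with T hT hT_large σ hσ hdelta
  have hT' : (0 : ℝ) < T := Nat.cast_pos.2 hT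
  have hprofile : q ^ 2 * (1 - δ) * T ≤ 2 * ((1 + exp ε) * σ ^ 2 + q * (1 - q)) := by
    refine le_of_mul_le_mul_right ?_ hT'
    calc q ^ 2 * (1 - δ) * T * T = (q * T) ^ 2 * (1 - δ) := by ring
      _ ≤ (q * T) ^ 2 * (1 - deltaS σ q T ε) := by gcongr
      _ ≤ 2 * T * ((1 + exp ε) * σ ^ 2 + q * (1 - q)) :=
          sq_mul_one_sub_deltaS_le hσ (Set.Ioc_subset_Icc_self hq) T ε
      _ = 2 * ((1 + exp ε) * σ ^ 2 + q * (1 - q)) * T := by ring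
  have hmixture_variance : 4 * (q * (1 - q)) ≤ q ^ 2 * (1 - δ) * T := by
    rw [div_le_iff₀ (by positivity)] at hT_large
    linear_combination q * hT_large
  rw [div_mul_eq_mul_div, div_le_iff₀ (by positivity)]
  linarith

/-- If `δ_S(σ_T, q, T, ε) ≤ δ < 1` for every `T ≥ 1`, then `σ_T² = Ω(T)`. -/
theorem sigma_sq_Omega_T (σ : ℕ → ℝ) (hσ : ∀ T, 1 ≤ T → 0 < σ T)
    (q : ℝ) (hq : q ∈ Set.Ioc (0 : ℝ) 1) (ε : ℝ) (hε : 0 ≤ ε)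
    (δ : ℝ) (hδ : δ ∈ Set.Ico (0 : ℝ) 1)
    (hbound : ∀ T : ℕ, 1 ≤ T → deltaS (σ T) q T ε ≤ δ) :
    ∃ c > (0 : ℝ), ∃ T₀ : ℕ, ∀ T : ℕ, T₀ ≤ T → c * T ≤ (σ T) ^ 2 := by
  obtain ⟨c, hc, hlarge⟩ := sigma_sq_Omega_T_general hq ε hδ.2
  obtain ⟨T₀, hT₀⟩ := eventually_atTop.1 (hlarge.and (eventually_ge_atTop 1))
  exact ⟨c, hc, T₀, fun T hT =>
    (hT₀ T hT).1 (σ T) (hσ T (hT₀ T hT).2).ne' (hbound T (hT₀ T hT).2)⟩
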